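/- Let A be a finitely generated locally indicable group, let φ : A → ℤ be a surjective homomorphism, let a ∈ A with φ(a) = 1, and let n > 0 be an integer. Let Â = A ∗_{⟨a = αⁿ⟩} ⟨α⟩ be the group obtained from A by adjoining an n-th root α of a, i.e. the pushout of the homomorphisms ℤ → A, 1 ↦ a, and ℤ → ℤ, 1 ↦ n. Then Â is locally indicable. -/

import Mathlib

/-- A group `G` is locally indicable if every non-trivial finitely generated
subgroup of `G` admits a surjective homomorphism onto `ℤ`. -/
def LocallyIndicable (G : Type*) [Group G] : Prop :=
  ∀ H : Subgroup G, H.FG → H ≠ ⊥ → ∃ f : H →* Multiplicative ℤ, Function.Surjective f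

/-!
A regular wreath product of locally indicable groups is locally indicable, so the groups below only
have to be embedded in such products, in the manner of Kaluzhnin and Krasner. A homomorphism
`Λ : G → D ≀ᵣ Q` is injective as soon as some homomorphism `ρ : D → G` turns `Λ g` into the pair
consisting of the constant function `g` and an element of `Q`, up to conjugation by a fixed
function `Q → G`.

A free product of groups `Kᵢ` embeds in this way in `F ≀ᵣ ∏ Kᵢ` with `F` free: there is one
generator `[k]` of `F` for each element `k` of each factor, and `k ∈ Kᵢ` is sent to the conjugate of
`k ∈ ∏ Kᵢ` by the function `x ↦ [xᵢ]`; here `ρ [k] = k`. Nielsen–Schreier handles `F`.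

Adjoining an `n`-th root `α` of `a` yields a group that embeds in `D ≀ᵣ ℤ`, where `D` is a free
product of copies of `A` indexed by the residues modulo `n`. An element `g` of `A` is sent to the
pair of `n φ(g)` and the function that takes the value `g`, in the copy of index `x mod n`, at `x`.
The root `α` is sent to the conjugate of `1 ∈ ℤ` by the function whose value at `x` is
`a ^ ⌊x / n⌋` in the copy of index `x mod n`. Here `ρ` conjugates the `r`-th copy by `α ^ (-r)`.
-/

open Function Monoid

universe u

namespace LocallyIndicable

theorem exists_surjective_of_hom_ne_one {H Q : Type*} [Group H] [Group Q] [Group.FG H]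
    (hQ : LocallyIndicable Q) {f : H →* Q} (hf : f ≠ 1) :
    ∃ g : H →* Multiplicative ℤ, Surjective g := by
  have range_fg : f.range.FG := (Group.fg_iff_subgroup_fg _).1 inferInstance
  obtain ⟨g, hg⟩ := hQ f.range range_fg (mt f.range_eq_bot_iff.1 hf)
  exact ⟨g.comp f.rangeRestrict, hg.comp f.rangeRestrict_surjective⟩

theorem of_injective {G Q : Type*} [Group G] [Group Q] (hQ : LocallyIndicable Q) (f : G →* Q)
    (hf : Injective f) : LocallyIndicable G := by
  intro H hH hne
  have := (Group.fg_iff_subgroup_fg H).2 hH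
  refine hQ.exists_surjective_of_hom_ne_one (f := f.comp H.subtype) fun h ↦ hne ?_
  rw [← H.range_subtype, MonoidHom.range_eq_bot_iff]
  ext x
  exact hf (by simpa using DFunLike.congr_fun h x)

theorem of_ker {G Q : Type*} [Group G] [Group Q] (hQ : LocallyIndicable Q) (f : G →* Q)
    (hker : LocallyIndicable f.ker) : LocallyIndicable G := by
  intro H hH hne
  have := (Group.fg_iff_subgroup_fg H).2 hH
  by_cases hf : f.comp H.subtype = 1
  · have hle : H ≤ f.ker := fun x hx ↦ f.mem_ker.2 (DFunLike.congr_fun hf ⟨x, hx⟩)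
    refine hker.exists_surjective_of_hom_ne_one (f := Subgroup.inclusion hle) fun h ↦ hne ?_
    rw [Subgroup.eq_bot_iff_forall]
    exact fun x hx ↦ congrArg Subtype.val (DFunLike.congr_fun h (⟨x, hx⟩ : H))
  · exact hQ.exists_surjective_of_hom_ne_one hf

theorem pi {I : Type*} {K : I → Type*} [∀ i, Group (K i)] (hK : ∀ i, LocallyIndicable (K i)) :
    LocallyIndicable (∀ i, K i) := by
  intro H hH hne
  have := (Group.fg_iff_subgroup_fg H).2 hH
  obtain ⟨i, hi⟩ : ∃ i, (Pi.evalMonoidHom K i).comp H.subtype ≠ 1 := by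
    by_contra! h
    refine hne ((Subgroup.eq_bot_iff_forall H).2 fun x hx ↦ funext fun i ↦ ?_)
    exact DFunLike.congr_fun (h i) ⟨x, hx⟩
  exact (hK i).exists_surjective_of_hom_ne_one hi

theorem of_isFreeGroup (F : Type*) [Group F] [IsFreeGroup F] : LocallyIndicable F := by
  intro H _ hne
  have : Nonempty (IsFreeGroup.Generators H) := by
    by_contra! h
    have := (IsFreeGroup.toFreeGroup H).toEquiv.subsingleton
    exact hne H.eq_bot_of_subsingleton
  obtain ⟨x⟩ := this
  refine ⟨IsFreeGroup.lift fun _ ↦ Multiplicative.ofAdd 1, fun z ↦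
    ⟨IsFreeGroup.of x ^ z.toAdd, ?_⟩⟩
  rw [map_zpow, IsFreeGroup.lift_of, ← ofAdd_zsmul, smul_eq_mul, mul_one, ofAdd_toAdd]

theorem multiplicative_int : LocallyIndicable (Multiplicative ℤ) :=
  (of_isFreeGroup (FreeGroup Unit)).of_injective FreeGroup.mulEquivIntOfUnique.symm.toMonoidHom
    FreeGroup.mulEquivIntOfUnique.symm.injective

theorem regularWreathProduct {D Q : Type*} [Group D] [Group Q] (hD : LocallyIndicable D)
    (hQ : LocallyIndicable Q) : LocallyIndicable (D ≀ᵣ Q) := by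
  refine hQ.of_ker RegularWreathProduct.rightHom ?_
  have right_eq_one (w : (RegularWreathProduct.rightHom : D ≀ᵣ Q →* Q).ker) : w.1.right = 1 := w.2
  let leftHom : (RegularWreathProduct.rightHom : D ≀ᵣ Q →* Q).ker →* (Q → D) :=
    MonoidHom.mk' (fun w ↦ w.1.left) fun v w ↦ by ext x; simp [right_eq_one]
  refine (pi fun _ ↦ hD).of_injective leftHom fun v w h ↦ Subtype.ext ?_
  exact RegularWreathProduct.ext h ((right_eq_one v).trans (right_eq_one w).symm)

end LocallyIndicable

section Wreath

variable {G D E Q : Type*} [Group G] [Group D] [Group E] [Group Q]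

/-- The homomorphism of regular wreath products induced by a homomorphism of the base groups. -/
def wreathMap (ρ : D →* E) : D ≀ᵣ Q →* E ≀ᵣ Q :=
  MonoidHom.mk' (fun w ↦ ⟨fun x ↦ ρ (w.left x), w.right⟩) fun v w ↦ by ext <;> simp

/-- The homomorphism `g ↦ (x ↦ f x g, π g)` to a regular wreath product, conjugated by the function
`c : Q → D`. Here `f` is a family of homomorphisms that is constant on the cosets of the image of
`π`. -/
def wreathHom (π : G →* Q) (f : Q → G →* D) (hf : ∀ g x, f ((π g)⁻¹ * x) = f x) (c : Q → D) :
    G →* D ≀ᵣ Q :=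
  MonoidHom.mk' (fun g ↦ ⟨fun x ↦ c x * f x g * (c ((π g)⁻¹ * x))⁻¹, π g⟩) fun g h ↦ by
    ext <;> simp [hf, mul_assoc]

theorem wreathHom_const_id_injective (π : G →* Q) (c : Q → G) :
    Injective (wreathHom π (fun _ ↦ MonoidHom.id G) (fun _ _ ↦ rfl) c) := by
  refine (injective_iff_map_eq_one _).2 fun g hg ↦ ?_
  have hπ : π g = 1 := congrArg RegularWreathProduct.right hg
  have hconj : c 1 * g * (c ((π g)⁻¹ * 1))⁻¹ = 1 :=
    congrFun (congrArg RegularWreathProduct.left hg) 1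
  simpa [hπ] using hconj

theorem LocallyIndicable.of_wreathMap_comp_eq (hD : LocallyIndicable D) (hQ : LocallyIndicable Q)
    (Λ : G →* D ≀ᵣ Q) (ρ : D →* G) (π : G →* Q) (c : Q → G)
    (h : (wreathMap ρ).comp Λ = wreathHom π (fun _ ↦ MonoidHom.id G) (fun _ _ ↦ rfl) c) :
    LocallyIndicable G := by
  refine (hD.regularWreathProduct hQ).of_injective Λ (Injective.of_comp (f := wreathMap ρ) ?_)
  rw [← MonoidHom.coe_comp, h]
  exact wreathHom_const_id_injective π c

end Wreath

section FreeProduct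

variable {I : Type*} {K : I → Type*} [∀ i, Group (K i)]

/-- The embedding of the free product of the groups `K i` in the regular wreath product of a free
group by the direct product of the `K i`. The free group has one generator for each element of each
factor. -/
def coprodIToWreath [DecidableEq I] : CoprodI K →* FreeGroup (Σ i, K i) ≀ᵣ (∀ i, K i) :=
  CoprodI.lift fun i ↦ wreathHom (MonoidHom.mulSingle K i) (fun _ ↦ 1) (fun _ _ ↦ rfl)
    fun x ↦ FreeGroup.of ⟨i, x i⟩

theorem wreathMap_comp_coprodIToWreath [DecidableEq I] :
    (wreathMap (FreeGroup.lift fun k : Σ i, K i ↦ CoprodI.of k.2)).comp coprodIToWreath =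
      wreathHom (CoprodI.lift (MonoidHom.mulSingle K)) (fun _ ↦ MonoidHom.id _) (fun _ _ ↦ rfl)
        1 := by
  refine CoprodI.ext_hom _ _ fun i ↦ ?_
  ext k x <;> simp [coprodIToWreath, wreathMap, wreathHom]

theorem LocallyIndicable.coprodI (hK : ∀ i, LocallyIndicable (K i)) :
    LocallyIndicable (CoprodI K) := by
  classical
  exact of_wreathMap_comp_eq (of_isFreeGroup _) (pi hK) _ _ _ _ wreathMap_comp_coprodIToWreath

end FreeProduct

/-- `Ahat` is the group obtained from `A` by adjoining an `n`-th root `α` of `a`: it is the pushout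
of `ℤ → A, 1 ↦ a` and `ℤ → ℤ, 1 ↦ n`, with `α` the image of the generator of the second `ℤ`. -/
structure IsRootAdjunction {A Ahat : Type u} [Group A] [Group Ahat] (a : A) (n : ℕ)
    (ι : A →* Ahat) (α : Ahat) : Prop where
  map_eq_pow : ι a = α ^ n
  existsUnique_lift (Q : Type u) [Group Q] (f : A →* Q) (β : Q) :
    f a = β ^ n → ∃! h : Ahat →* Q, h.comp ι = f ∧ h α = β

theorem IsRootAdjunction.hom_ext {A Ahat Q : Type u} [Group A] [Group Ahat] [Group Q] {a : A}
    {n : ℕ} {ι : A →* Ahat} {α : Ahat} (h : IsRootAdjunction a n ι α) {f g : Ahat →* Q}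
    (hι : f.comp ι = g.comp ι) (hα : f α = g α) : f = g := by
  have hroot : g.comp ι a = g α ^ n := by rw [MonoidHom.comp_apply, h.map_eq_pow, map_pow]
  exact (h.existsUnique_lift Q _ _ hroot).unique ⟨hι, hα⟩ ⟨rfl, rfl⟩

section Root

variable {A : Type*} [Group A] (φ : A →* Multiplicative ℤ) (a : A) (n : ℕ)

theorem toAdd_inv_pow_mul_emod (g : A) (x : Multiplicative ℤ) :
    (((φ ^ n) g)⁻¹ * x).toAdd % n = x.toAdd % n := by
  simp [Int.add_emod]

/-- The restriction to `A` of the embedding of the group with an `n`-th root adjoined. The copies of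
`A` in the free product are indexed by all integers, but only the residues modulo `n` occur. -/
def baseToWreath : A →* CoprodI (fun _ : ℤ ↦ A) ≀ᵣ Multiplicative ℤ :=
  wreathHom (φ ^ n) (fun x ↦ CoprodI.of (M := fun _ ↦ A) (i := x.toAdd % n))
    (fun g x ↦ by rw [toAdd_inv_pow_mul_emod]) 1

/-- The restriction to the powers of the root of the embedding of the group with an `n`-th root of
`a` adjoined. -/
def rootToWreath : Multiplicative ℤ →* CoprodI (fun _ : ℤ ↦ A) ≀ᵣ Multiplicative ℤ :=
  wreathHom (MonoidHom.id _) (fun _ ↦ 1) (fun _ _ ↦ rfl)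
    fun x ↦ CoprodI.of (M := fun _ ↦ A) (i := x.toAdd % n) (a ^ (x.toAdd / n))

variable {φ a n}

theorem baseToWreath_eq_rootToWreath_pow (ha : φ a = Multiplicative.ofAdd 1) (hn : 0 < n) :
    baseToWreath φ n a = rootToWreath a n (Multiplicative.ofAdd 1) ^ n := by
  rw [← map_pow]
  ext x
  · have hdiv : (-(n : ℤ) + x.toAdd) / n = -1 + x.toAdd / n := by
      simpa [Int.ediv_self, hn.ne'] using Int.add_ediv_of_dvd_left (dvd_neg.2 (dvd_refl (n : ℤ)))
    simp [baseToWreath, rootToWreath, wreathHom, hdiv, zpow_add]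
  · simp [baseToWreath, rootToWreath, wreathHom, ha]

variable {Ahat : Type*} [Group Ahat] (ι : A →* Ahat) (α : Ahat)

/-- The homomorphism from the free product of copies of `A` that maps the `r`-th copy to the
conjugate of `ι A` by `α ^ (-r)`. -/
def liftConj : CoprodI (fun _ : ℤ ↦ A) →* Ahat :=
  CoprodI.lift fun r ↦ (MulAut.conj (α ^ (-r))).toMonoidHom.comp ι

theorem liftConj_of (r : ℤ) (g : A) :
    liftConj ι α (CoprodI.of (M := fun _ ↦ A) (i := r) g) = α ^ (-r) * ι g * (α ^ (-r))⁻¹ := by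
  rw [liftConj, CoprodI.lift_of]
  rfl

theorem wreathMap_liftConj_comp_baseToWreath :
    (wreathMap (liftConj ι α)).comp (baseToWreath φ n) =
      wreathHom (φ ^ n) (fun _ ↦ ι) (fun _ _ ↦ rfl) (fun x ↦ α ^ (-(x.toAdd % n))) := by
  ext g x
  · simp [baseToWreath, wreathHom, wreathMap, liftConj_of, Int.add_emod]
  · rfl

variable {ι α}

theorem liftConj_of_zpow (hroot : ι a = α ^ n) (r q : ℤ) :
    liftConj ι α (CoprodI.of (M := fun _ ↦ A) (i := r) (a ^ q)) = α ^ (n * q) := by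
  rw [liftConj_of, map_zpow, hroot, ← zpow_natCast, ← zpow_mul, ← zpow_neg, ← zpow_add,
    ← zpow_add, neg_neg, neg_add_cancel_comm]

theorem wreathMap_liftConj_comp_rootToWreath (hroot : ι a = α ^ n) :
    (wreathMap (liftConj ι α)).comp (rootToWreath a n) =
      wreathHom (MonoidHom.id _) (fun _ ↦ zpowersHom Ahat α) (fun _ _ ↦ rfl)
        (fun x ↦ α ^ (-(x.toAdd % n))) := by
  have hexp (k x : ℤ) : n * (x / n) - n * ((-k + x) / n) = -(x % n) + k + (-k + x) % n := by
    linarith [Int.emod_add_mul_ediv x n, Int.emod_add_mul_ediv (-k + x) n]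
  refine MonoidHom.ext fun k ↦ RegularWreathProduct.ext (funext fun x ↦ ?_) rfl
  calc
    _ = α ^ (n * (x.toAdd / n)) * (α ^ (n * ((-k.toAdd + x.toAdd) / n)))⁻¹ := by
      simp [rootToWreath, wreathHom, wreathMap, liftConj_of_zpow hroot, -map_zpow]
    _ = α ^ (-(x.toAdd % n)) * α ^ k.toAdd * (α ^ (-((-k.toAdd + x.toAdd) % n)))⁻¹ := by
      rw [← zpow_neg, ← zpow_neg, ← zpow_add, ← zpow_add, ← zpow_add, ← sub_eq_add_neg, hexp,
        neg_neg]
    _ = _ := rfl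

end Root

theorem stmt_3_general {A Ahat : Type u} [Group A] [Group Ahat] (hA : LocallyIndicable A)
    (φ : A →* Multiplicative ℤ) (a : A) (ha : φ a = Multiplicative.ofAdd 1) (n : ℕ) (hn : 0 < n)
    (ι : A →* Ahat) (α : Ahat) (h : IsRootAdjunction a n ι α) : LocallyIndicable Ahat := by
  obtain ⟨Λ, ⟨hΛι, hΛα⟩, -⟩ := h.existsUnique_lift _ (baseToWreath φ n)
    (rootToWreath a n (Multiplicative.ofAdd 1)) (baseToWreath_eq_rootToWreath_pow ha hn)
  obtain ⟨Φ, hΦι, hΦα⟩ : ∃ Φ : Ahat →* Multiplicative ℤ,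
      Φ.comp ι = φ ^ n ∧ Φ α = Multiplicative.ofAdd 1 :=
    ⟨RegularWreathProduct.rightHom.comp Λ, by rw [MonoidHom.comp_assoc, hΛι]; rfl,
      by rw [MonoidHom.comp_apply, hΛα]; rfl⟩
  refine (LocallyIndicable.coprodI fun _ ↦ hA).of_wreathMap_comp_eq .multiplicative_int Λ
    (liftConj ι α) Φ (fun x ↦ α ^ (-(x.toAdd % n))) (h.hom_ext ?_ ?_)
  · rw [MonoidHom.comp_assoc, hΛι, wreathMap_liftConj_comp_baseToWreath]
    simp only [← hΦι]
    rfl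
  · rw [MonoidHom.comp_apply, hΛα, ← MonoidHom.comp_apply,
      wreathMap_liftConj_comp_rootToWreath h.map_eq_pow]
    ext x <;> simp [wreathHom, hΦα]

/-- Let `A` be a finitely generated locally indicable group, `φ : A → ℤ` a
surjective homomorphism, `a ∈ A` with `φ a = 1` and `n > 0`.  Let `Â` be the
group obtained from `A` by adjoining an `n`-th root `α` of `a`, i.e. the
pushout of `ℤ → A, 1 ↦ a` and `ℤ → ℤ, 1 ↦ n`; it is presented here as any
group `Ahat` with `ι : A →* Ahat` and `α : Ahat` with `ι a = α ^ n`
satisfying the universal property of this pushout.  Then `Â` is locally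
indicable. -/
theorem stmt_3 {A Ahat : Type} [Group A] [Group Ahat]
    (hfg : Group.FG A) (hA : LocallyIndicable A)
    (φ : A →* Multiplicative ℤ) (hφ : Function.Surjective φ)
    (a : A) (ha : φ a = Multiplicative.ofAdd 1)
    (n : ℕ) (hn : 0 < n)
    (ι : A →* Ahat) (α : Ahat) (hroot : ι a = α ^ n)
    (hUP : ∀ (Q : Type) [Group Q] (f : A →* Q) (β : Q), f a = β ^ n →
      ∃! h : Ahat →* Q, h.comp ι = f ∧ h α = β) :
    LocallyIndicable Ahat := by
  exact stmt_3_general hA φ a ha n hn ι α ⟨hroot, hUP⟩
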